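/- Let n ≥ 2 and let V : ℝ → M_n(ℝ) be smooth, and suppose there exists t₀ ∈ ℝ such that V(t₀) is not a scalar multiple of the identity matrix E. Then the real vector space of all symmetry pairs (τ, Γ) of V (a subspace of C^∞(ℝ, ℝ) × M_n(ℝ), since the symmetry-pair condition is linear in (τ, Γ)) has dimension at most n² − 2n + 4; equivalently, any n² − 2n + 5 symmetry pairs of V are linearly dependent over ℝ. (This is the essential part of the theorem that the maximal Lie invariance algebra of such a system x_tt = V(t)x has dimension at most n² + 4.) -/

import Mathlib

/-- A pair `(τ, Γ)`, with `τ : ℝ → ℝ` smooth and `Γ` a constant `n × n` matrix, is a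
*symmetry pair* of a matrix-valued function `V : ℝ → M_n(ℝ)` if
`τ(t)·V'(t) = [Γ, V(t)] − 2τ'(t)·V(t) + (1/2)τ'''(t)·E` for all `t ∈ ℝ`. -/
def IsSymmetryPair (n : ℕ) (V : ℝ → Matrix (Fin n) (Fin n) ℝ)
    (τ : ℝ → ℝ) (Γ : Matrix (Fin n) (Fin n) ℝ) : Prop :=
  ContDiff ℝ (⊤ : ℕ∞) τ ∧
    ∀ t : ℝ,
      τ t • (Matrix.of fun i j => deriv (fun s => V s i j) t) =
        (Γ * V t - V t * Γ) - (2 * deriv τ t) • V t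
          + (iteratedDeriv 3 τ t / 2) • (1 : Matrix (Fin n) (Fin n) ℝ)

/-!
A symmetry pair with `τ(t₀) = τ'(t₀) = 0` satisfies `[Γ, V(t₀)] ∈ ℝE`, hence `[Γ, V(t₀)] = 0` by
taking traces. So, up to the two parameters `τ(t₀)`, `τ'(t₀)`, the matrix `Γ` lies in the
centralizer of `A = V(t₀)`, whose dimension is at most `n² - 2n + 2` because `A` is not scalar:
choose a vector `v` and a functional `w` with `w v = 0` and `w (A v) = 1`; an element `(φ, u)` of
the kernel of `(φ, u) ↦ [A, v ⊗ φ + u ⊗ w]` is determined by `(w u, w (A u))`, so `ad A` has rank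
at least `2n - 2`.

It remains to see that `Γ = 0` and `τ(t₀) = 0` force `τ = 0`. If `ℓ` is a functional with
`ℓ E = 0 ≠ ℓ(V(t₀))`, the symmetry condition makes `τ² ℓ(V)` constant, so `τ` vanishes near `t₀`;
and the trace of the condition is a linear third-order equation for `τ` alone, so `τ` vanishes
everywhere.
-/

section Centralizer

open Module

variable {R K E ι : Type*}

theorem eq_zero_of_commute_smulRight_add_smulRight [CommRing R] [AddCommGroup E] [Module R E]
    {A : End R E} {v u : E} {w φ : Dual R E} (hwv : w v = 0) (hwAv : w (A v) = 1)
    (hwu : w u = 0) (hwAu : w (A u) = 0) (h : Commute A (φ.smulRight v + w.smulRight u)) :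
    φ = 0 ∧ u = 0 := by
  have apply_comm (x : E) : A (φ x • v + w x • u) = φ (A x) • v + w (A x) • u :=
    LinearMap.congr_fun h x
  have hφ : φ = 0 := by
    ext x
    simpa [hwv, hwAv, hwu, hwAu] using congrArg w (apply_comm x)
  exact ⟨hφ, by simpa [hφ, hwv, hwAv] using (apply_comm v).symm⟩

variable [Field K] [AddCommGroup E] [Module K E]

theorem exists_dual_apply_eq_zero_apply_eq_one {A : End K E} (hA : ∀ c : K, A ≠ c • 1) :
    ∃ (v : E) (w : Dual K E), w v = 0 ∧ w (A v) = 1 := by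
  obtain ⟨v, hv⟩ : ∃ v, LinearIndependent K ![v, A v] := by
    by_contra! hdep
    obtain ⟨c, hc⟩ := LinearMap.exists_eq_smul_id_of_forall_notLinearIndependent hdep
    exact hA c hc
  have hAv : A v ∉ Submodule.span K {v} := by
    rw [Submodule.mem_span_singleton, not_exists]
    exact (LinearIndependent.pair_iff' (by simpa using hv.ne_zero 0)).1 hv
  obtain ⟨f, hfAv, hf⟩ := Submodule.exists_le_ker_of_notMem hAv
  have hfv : f v = 0 := hf (Submodule.mem_span_singleton_self v)
  exact ⟨v, (f (A v))⁻¹ • f, by simp [hfv], by simp [hfAv]⟩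

variable [FiniteDimensional K E]

theorem two_mul_finrank_le_finrank_range_mulLeft_sub_mulRight_add_two {A : End K E}
    (hA : ∀ c : K, A ≠ c • 1) :
    2 * finrank K E ≤ finrank K (LinearMap.mulLeft K A - LinearMap.mulRight K A).range + 2 := by
  obtain ⟨v, w, hwv, hwAv⟩ := exists_dual_apply_eq_zero_apply_eq_one hA
  let T : Dual K E × E →ₗ[K] End K E :=
    (LinearMap.smulRightₗ.flip v).coprod (LinearMap.smulRightₗ w)
  let D : Dual K E × E →ₗ[K] End K E := (LinearMap.mulLeft K A - LinearMap.mulRight K A) ∘ₗ T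
  let π : Dual K E × E →ₗ[K] K × K := (w.prod (w ∘ₗ A)) ∘ₗ LinearMap.snd K _ _
  have hπ : Function.Injective (π.domRestrict D.ker) := by
    refine (injective_iff_map_eq_zero _).2 fun ⟨⟨φ, u⟩, hD⟩ h ↦ ?_
    have hcomm : Commute A (φ.smulRight v + w.smulRight u) := sub_eq_zero.1 hD
    obtain ⟨hwu, hwAu⟩ : w u = 0 ∧ w (A u) = 0 := by simpa [π] using h
    simpa using eq_zero_of_commute_smulRight_add_smulRight hwv hwAv hwu hwAu hcomm
  have hker : finrank K D.ker ≤ 2 := by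
    simpa using LinearMap.finrank_le_finrank_of_injective hπ
  have hrange : finrank K D.range ≤
      finrank K (LinearMap.mulLeft K A - LinearMap.mulRight K A).range :=
    Submodule.finrank_mono (LinearMap.range_comp_le_range _ _)
  have hrank_nullity : finrank K D.range + finrank K D.ker = finrank K E + finrank K E := by
    simpa [Subspace.dual_finrank_eq] using D.finrank_range_add_finrank_ker
  lia

theorem finrank_centralizer_add_two_mul_le {A : End K E} (hA : ∀ c : K, A ≠ c • 1) :
    finrank K (Subalgebra.centralizer K {A}) + 2 * finrank K E ≤ finrank K E ^ 2 + 2 := by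
  have hker : Subalgebra.toSubmodule (Subalgebra.centralizer K {A}) =
      (LinearMap.mulLeft K A - LinearMap.mulRight K A).ker := by
    ext B
    simp [Subalgebra.mem_centralizer_iff, sub_eq_zero]
  have hrank_nullity :=
    (LinearMap.mulLeft K A - LinearMap.mulRight K A).finrank_range_add_finrank_ker
  rw [← hker, Subalgebra.finrank_toSubmodule, finrank_linearMap, ← sq] at hrank_nullity
  have := two_mul_finrank_le_finrank_range_mulLeft_sub_mulRight_add_two hA
  lia

theorem finrank_matrix_centralizer_add_two_mul_le [Fintype ι] [DecidableEq ι]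
    {A : Matrix ι ι K} (hA : ∀ c : K, A ≠ c • 1) :
    finrank K (Subalgebra.centralizer K {A}) + 2 * Fintype.card ι ≤ Fintype.card ι ^ 2 + 2 := by
  let e : Matrix ι ι K ≃ₐ[K] End K (ι → K) := Matrix.toLinAlgEquiv'
  have heA (c : K) : e A ≠ c • 1 := by
    rw [← map_one e, ← map_smul]
    exact e.injective.ne (hA c)
  have hmem : ∀ B ∈ Subalgebra.toSubmodule (Subalgebra.centralizer K {A}),
      e B ∈ Subalgebra.toSubmodule (Subalgebra.centralizer K {e A}) := by
    simp [Subalgebra.mem_centralizer_iff, ← map_mul]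
  have hle : finrank K (Subalgebra.centralizer K {A}) ≤
      finrank K (Subalgebra.centralizer K {e A}) :=
    LinearMap.finrank_le_finrank_of_injective (f := e.toLinearMap.restrict hmem)
      fun _ _ h ↦ Subtype.ext (e.injective (congrArg Subtype.val h))
  have := finrank_centralizer_add_two_mul_le heA
  rw [finrank_fintype_fun_eq_card] at this
  lia

end Centralizer

theorem commute_of_mul_sub_mul_eq_smul_one {R ι : Type*} [CommRing R] [NoZeroDivisors R]
    [CharZero R] [Fintype ι] [DecidableEq ι] {A B : Matrix ι ι R} {c : R}
    (h : A * B - B * A = c • 1) : Commute A B := by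
  cases isEmpty_or_nonempty ι
  · exact Subsingleton.elim _ _
  have hc : c = 0 := by
    simpa [Matrix.trace_mul_comm A] using (congrArg Matrix.trace h).symm
  exact sub_eq_zero.1 (by rw [h, hc, zero_smul])

section LinearODE

open scoped Matrix

theorem eq_zero_of_hasDerivAt_clm_apply {E : Type*} [NormedAddCommGroup E] [NormedSpace ℝ E]
    {A : ℝ → E →L[ℝ] E} (hA : Continuous A) {f : ℝ → E}
    (hf : ∀ t, HasDerivAt f (A t (f t)) t) {t₀ : ℝ} (h₀ : f t₀ = 0) : f = 0 := by
  funext t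
  obtain ⟨a, ha⟩ := exists_lt (min t t₀)
  obtain ⟨b, hb⟩ := exists_gt (max t t₀)
  rw [lt_min_iff] at ha
  rw [max_lt_iff] at hb
  obtain ⟨C, hC⟩ := isCompact_Icc.exists_bound_of_continuousOn (hA.continuousOn (s := Set.Icc a b))
  have hlip (s : ℝ) (hs : s ∈ Set.Ioo a b) : LipschitzOnWith C.toNNReal (A s) Set.univ :=
    ((A s).lipschitz.weaken (NNReal.le_toNNReal_of_coe_le
      (hC s (Set.Ioo_subset_Icc_self hs)))).lipschitzOnWith
  exact ODE_solution_unique_of_mem_Ioo (g := 0) hlip ⟨ha.2, hb.2⟩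
    (fun s _ ↦ ⟨hf s, Set.mem_univ _⟩)
    (fun s _ ↦ ⟨by simp [hasDerivAt_zero], Set.mem_univ _⟩) h₀ ⟨ha.1, hb.1⟩

theorem eq_zero_of_hasDerivAt_mulVec {ι : Type*} [Fintype ι]
    {M : ℝ → Matrix ι ι ℝ} (hM : Continuous M) {f : ℝ → ι → ℝ}
    (hf : ∀ t, HasDerivAt f (M t *ᵥ f t) t) {t₀ : ℝ} (h₀ : f t₀ = 0) : f = 0 := by
  classical
  let L : Matrix ι ι ℝ →ₗ[ℝ] (ι → ℝ) →L[ℝ] (ι → ℝ) :=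
    (Matrix.toLin'.trans LinearMap.toContinuousLinearMap).toLinearMap
  exact eq_zero_of_hasDerivAt_clm_apply (A := fun t ↦ L (M t))
    (L.continuous_of_finiteDimensional.comp hM) hf h₀

theorem eq_zero_of_iteratedDeriv_three_eq {τ v : ℝ → ℝ} (hτ : ContDiff ℝ 3 τ)
    (hv : Differentiable ℝ v)
    (h : ∀ t, iteratedDeriv 3 τ t = 4 * v t * deriv τ t + 2 * deriv v t * τ t)
    {t₀ : ℝ} (h₀ : ∀ k < 3, iteratedDeriv k τ t₀ = 0) : τ = 0 := by
  have hderiv (k : ℕ) (hk : k < 3) (t : ℝ) :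
      HasDerivAt (iteratedDeriv k τ) (iteratedDeriv (k + 1) τ t) t := by
    rw [iteratedDeriv_succ]
    exact (hτ.differentiable_iteratedDeriv k (mod_cast hk) t).hasDerivAt
  -- In the coordinates `(τ, τ', τ'' - 2vτ)` the derivative `v'` drops out of the equation, so the
  -- first-order system has continuous coefficients.
  let M (t : ℝ) : Matrix (Fin 3) (Fin 3) ℝ :=
    !![0, 1, 0; 0, 0, 1; 0, 0, 0] + v t • !![0, 0, 0; 2, 0, 0; 0, 2, 0]
  let f (t : ℝ) : Fin 3 → ℝ := ![τ t, deriv τ t, iteratedDeriv 2 τ t - 2 * v t * τ t]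
  have hM : Continuous M := continuous_const.add (hv.continuous.smul continuous_const)
  have hMf (t : ℝ) :
      M t *ᵥ f t = ![deriv τ t, iteratedDeriv 2 τ t, 2 * v t * deriv τ t] := by
    ext i
    fin_cases i <;> simp [M, f, Matrix.mulVec, dotProduct, Fin.sum_univ_three, mul_comm (v t) 2]
  have hf (t : ℝ) : HasDerivAt f (M t *ᵥ f t) t := by
    have hτ₀ : HasDerivAt τ (deriv τ t) t := by simpa using hderiv 0 (by simp) t
    have hτ₁ : HasDerivAt (deriv τ) (iteratedDeriv 2 τ t) t := by simpa using hderiv 1 (by simp) t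
    have hτ₂ : HasDerivAt (iteratedDeriv 2 τ) (iteratedDeriv 3 τ t) t := hderiv 2 (by simp) t
    have hu := hτ₂.sub (((hv t).hasDerivAt.const_mul 2).mul hτ₀)
    have hu' : iteratedDeriv 3 τ t - (2 * deriv v t * τ t + 2 * v t * deriv τ t) =
        2 * v t * deriv τ t := by
      rw [h]
      ring
    rw [hMf, hasDerivAt_pi, Fin.forall_fin_succ, Fin.forall_fin_two]
    exact ⟨hτ₀, hτ₁, hu.congr_deriv hu'⟩
  have hf₀ : f t₀ = 0 := by
    have hτ₀ : τ t₀ = 0 := by simpa using h₀ 0 (by simp)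
    have hτ₁ : deriv τ t₀ = 0 := by simpa using h₀ 1 (by simp)
    simp [f, hτ₀, hτ₁, h₀ 2 (by simp)]
  exact funext fun t ↦ congrFun (congrFun (eq_zero_of_hasDerivAt_mulVec hM hf hf₀) t) 0

theorem sq_mul_eq_sq_mul_of_mul_deriv_eq {τ W : ℝ → ℝ} (hτ : Differentiable ℝ τ)
    (hW : Differentiable ℝ W) (h : ∀ t, τ t * deriv W t = -(2 * deriv τ t * W t)) (s t : ℝ) :
    τ s ^ 2 * W s = τ t ^ 2 * W t := by
  refine is_const_of_deriv_eq_zero (f := fun x ↦ τ x ^ 2 * W x) (by fun_prop) (fun x ↦ ?_) s t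
  have hd := ((hτ x).hasDerivAt.pow 2).mul (hW x).hasDerivAt
  refine (hd.congr_deriv ?_).deriv
  simp only [Pi.pow_apply]
  linear_combination τ x * h x

end LinearODE

theorem hasDerivAt_linearMap_matrix {m n F : Type*} [Finite m] [Finite n]
    [NormedAddCommGroup F] [NormedSpace ℝ F] (ℓ : Matrix m n ℝ →ₗ[ℝ] F)
    {V : ℝ → Matrix m n ℝ} {V' : Matrix m n ℝ} {t : ℝ}
    (hV : ∀ i j, HasDerivAt (fun s ↦ V s i j) (V' i j) t) :
    HasDerivAt (fun s ↦ ℓ (V s)) (ℓ V') t := by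
  cases nonempty_fintype m
  cases nonempty_fintype n
  let L : (m → n → ℝ) →L[ℝ] F := LinearMap.toContinuousLinearMap ℓ
  exact L.hasFDerivAt.comp_hasDerivAt t (hasDerivAt_pi.2 fun i ↦ hasDerivAt_pi.2 (hV i))

theorem card_le_of_linearIndependent_of_mem {K M ι : Type*} [Field K] [AddCommGroup M] [Module K M]
    [Fintype ι] {S : Submodule K M} {N : ℕ} (hS : Module.rank K S ≤ N) {p : ι → M}
    (hp : ∀ i, p i ∈ S) (hli : LinearIndependent K p) : Fintype.card ι ≤ N := by
  have hli' : LinearIndependent K fun i ↦ (⟨p i, hp i⟩ : S) := .of_comp S.subtype hli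
  have hrank : Module.finrank K S ≤ N := Module.finrank_le_of_rank_le hS
  have : Module.Finite K S := Module.rank_lt_aleph0_iff.1 (hS.trans_lt Cardinal.natCast_lt_aleph0)
  exact hli'.fintype_card_le_finrank.trans hrank

section SymmetryPairs

open scoped Topology

variable {n : ℕ} {V : ℝ → Matrix (Fin n) (Fin n) ℝ} {τ σ : ℝ → ℝ}
  {Γ Δ : Matrix (Fin n) (Fin n) ℝ} {t₀ : ℝ}

namespace IsSymmetryPair

theorem contDiff_three (h : IsSymmetryPair n V τ Γ) : ContDiff ℝ 3 τ :=
  h.1.of_le (WithTop.coe_le_coe.2 le_top)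

theorem differentiable (h : IsSymmetryPair n V τ Γ) : Differentiable ℝ τ :=
  h.1.differentiable (by simp)

theorem zero : IsSymmetryPair n V 0 0 :=
  ⟨contDiff_const, fun t ↦ by simp⟩

theorem add (h : IsSymmetryPair n V τ Γ) (h' : IsSymmetryPair n V σ Δ) :
    IsSymmetryPair n V (τ + σ) (Γ + Δ) := by
  refine ⟨h.1.add h'.1, fun t ↦ ?_⟩
  rw [deriv_add (h.differentiable t) (h'.differentiable t),
    iteratedDeriv_add h.contDiff_three.contDiffAt h'.contDiff_three.contDiffAt, Pi.add_apply,
    add_smul, h.2 t, h'.2 t, Matrix.add_mul, Matrix.mul_add]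
  module

theorem smul (c : ℝ) (h : IsSymmetryPair n V τ Γ) : IsSymmetryPair n V (c • τ) (c • Γ) := by
  refine ⟨h.1.const_smul c, fun t ↦ ?_⟩
  rw [deriv_const_smul c (h.differentiable t), iteratedDeriv_const_smul_field c τ, Pi.smul_apply,
    smul_assoc, h.2 t, Matrix.smul_mul, Matrix.mul_smul, smul_eq_mul, smul_eq_mul]
  module

theorem mul_deriv_linearMap (h : IsSymmetryPair n V τ Γ)
    (hV : ∀ i j, Differentiable ℝ fun t ↦ V t i j) (ℓ : Matrix (Fin n) (Fin n) ℝ →ₗ[ℝ] ℝ) (t : ℝ) :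
    τ t * deriv (fun s ↦ ℓ (V s)) t = ℓ (Γ * V t - V t * Γ) - 2 * deriv τ t * ℓ (V t) +
      iteratedDeriv 3 τ t / 2 * ℓ 1 := by
  have hderiv : deriv (fun s ↦ ℓ (V s)) t = ℓ (.of fun i j ↦ deriv (fun s ↦ V s i j) t) :=
    (hasDerivAt_linearMap_matrix ℓ fun i j ↦ (hV i j t).hasDerivAt).deriv
  rw [hderiv]
  simpa only [map_add, map_sub, map_smul, smul_eq_mul] using congrArg ℓ (h.2 t)

theorem commute_of_eq_zero_of_deriv_eq_zero (h : IsSymmetryPair n V τ Γ)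
    (h₀ : τ t₀ = 0) (h₁ : deriv τ t₀ = 0) : Commute Γ (V t₀) := by
  have hbracket : 0 = Γ * V t₀ - V t₀ * Γ + (iteratedDeriv 3 τ t₀ / 2) • 1 := by
    simpa [h₀, h₁] using h.2 t₀
  refine commute_of_mul_sub_mul_eq_smul_one (c := -(iteratedDeriv 3 τ t₀ / 2)) ?_
  rw [neg_smul]
  exact eq_neg_of_add_eq_zero_left hbracket.symm

theorem iteratedDeriv_three_eq [NeZero n] (h : IsSymmetryPair n V τ Γ)
    (hV : ∀ i j, Differentiable ℝ fun t ↦ V t i j) (t : ℝ) :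
    iteratedDeriv 3 τ t = 4 * ((V t).trace / n) * deriv τ t +
      2 * deriv (fun s ↦ (V s).trace / n) t * τ t := by
  have hn : (n : ℝ) ≠ 0 := NeZero.ne _
  have htrace := h.mul_deriv_linearMap hV (Matrix.traceLinearMap (Fin n) ℝ ℝ) t
  simp only [Matrix.traceLinearMap_apply, Matrix.trace_sub, Matrix.trace_mul_comm Γ, sub_self,
    Matrix.trace_one, Fintype.card_fin] at htrace
  rw [deriv_div_const]
  field_simp
  linear_combination -2 * htrace

theorem eq_zero_of_eventuallyEq_zero [NeZero n] (h : IsSymmetryPair n V τ Γ)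
    (hV : ∀ i j, Differentiable ℝ fun t ↦ V t i j) (h₀ : τ =ᶠ[𝓝 t₀] 0) : τ = 0 := by
  have htrace : Differentiable ℝ fun t ↦ (V t).trace / n := by
    simp only [Matrix.trace, Matrix.diag]
    fun_prop
  exact eq_zero_of_iteratedDeriv_three_eq h.contDiff_three htrace (h.iteratedDeriv_three_eq hV)
    fun k _ ↦ (h₀.iteratedDeriv_eq k).trans (by simp)

theorem eventuallyEq_zero_of_apply_eq_zero (h : IsSymmetryPair n V τ 0)
    (hV : ∀ i j, Differentiable ℝ fun t ↦ V t i j) (ht₀ : ∀ c : ℝ, V t₀ ≠ c • 1)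
    (h₀ : τ t₀ = 0) : τ =ᶠ[𝓝 t₀] 0 := by
  have hspan : V t₀ ∉ Submodule.span ℝ {1} := by
    rw [Submodule.mem_span_singleton, not_exists]
    exact fun c hc ↦ ht₀ c hc.symm
  obtain ⟨ℓ, hℓV, hℓ⟩ := Submodule.exists_le_ker_of_notMem hspan
  have hℓ1 : ℓ 1 = 0 := hℓ (Submodule.mem_span_singleton_self 1)
  have hW : Differentiable ℝ fun t ↦ ℓ (V t) := fun t ↦
    (hasDerivAt_linearMap_matrix ℓ fun i j ↦ (hV i j t).hasDerivAt).differentiableAt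
  have hconst (t : ℝ) : τ t ^ 2 * ℓ (V t) = τ t₀ ^ 2 * ℓ (V t₀) :=
    sq_mul_eq_sq_mul_of_mul_deriv_eq h.differentiable hW
      (fun s ↦ by simpa [hℓ1] using h.mul_deriv_linearMap hV ℓ s) t t₀
  filter_upwards [hW.continuous.continuousAt.eventually_ne hℓV] with t ht
  simpa [h₀, ht] using hconst t

theorem eq_zero_of_apply_eq_zero (h : IsSymmetryPair n V τ 0)
    (hV : ∀ i j, Differentiable ℝ fun t ↦ V t i j) (ht₀ : ∀ c : ℝ, V t₀ ≠ c • 1)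
    (h₀ : τ t₀ = 0) : τ = 0 := by
  have : NeZero n := ⟨by rintro rfl; exact ht₀ 0 (Subsingleton.elim _ _)⟩
  exact h.eq_zero_of_eventuallyEq_zero hV (h.eventuallyEq_zero_of_apply_eq_zero hV ht₀ h₀)

end IsSymmetryPair

/-- The real vector space of symmetry pairs of `V`, whose dimension is to be bounded. The ambient
space allows arbitrary functions `τ`, since smoothness is part of `IsSymmetryPair`. -/
def symmetryPairs (V : ℝ → Matrix (Fin n) (Fin n) ℝ) :
    Submodule ℝ ((ℝ → ℝ) × Matrix (Fin n) (Fin n) ℝ) where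
  carrier := {p | IsSymmetryPair n V p.1 p.2}
  zero_mem' := .zero
  add_mem' := .add
  smul_mem' c _ := .smul c

namespace symmetryPairs

/-- The `1`-jet `(τ, Γ) ↦ (τ(t₀), τ'(t₀))` on the symmetry pairs of `V`. It splits off the two
dimensions that the centralizer of `V(t₀)` does not account for. -/
noncomputable def oneJet (V : ℝ → Matrix (Fin n) (Fin n) ℝ) (t₀ : ℝ) :
    symmetryPairs V →ₗ[ℝ] ℝ × ℝ where
  toFun p := (p.1.1 t₀, deriv p.1.1 t₀)
  map_add' p q := Prod.ext rfl (deriv_add (p.2.differentiable t₀) (q.2.differentiable t₀))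
  map_smul' c p := Prod.ext rfl (deriv_const_smul c (p.2.differentiable t₀))

theorem rank_ker_oneJet_le (hV : ∀ i j, Differentiable ℝ fun t ↦ V t i j)
    (ht₀ : ∀ c : ℝ, V t₀ ≠ c • 1) :
    Module.rank ℝ (oneJet V t₀).ker ≤ Module.finrank ℝ (Subalgebra.centralizer ℝ {V t₀}) := by
  have hjet (p : (oneJet V t₀).ker) : p.1.1.1 t₀ = 0 ∧ deriv p.1.1.1 t₀ = 0 :=
    Prod.mk.inj p.2
  let γ : (oneJet V t₀).ker →ₗ[ℝ] Matrix (Fin n) (Fin n) ℝ :=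
    LinearMap.snd ℝ _ _ ∘ₗ (symmetryPairs V).subtype ∘ₗ (oneJet V t₀).ker.subtype
  have hγ (p) : γ p ∈ Subalgebra.toSubmodule (Subalgebra.centralizer ℝ {V t₀}) := by
    have hcomm : Commute (γ p) (V t₀) :=
      p.1.2.commute_of_eq_zero_of_deriv_eq_zero (hjet p).1 (hjet p).2
    simpa [Subalgebra.mem_centralizer_iff] using hcomm.symm.eq
  have hinj : Function.Injective (γ.codRestrict _ hγ) := by
    refine (injective_iff_map_eq_zero _).2 fun p hp ↦ ?_
    have hΓ : p.1.1.2 = 0 := congrArg Subtype.val hp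
    have hpair : IsSymmetryPair n V p.1.1.1 0 := hΓ ▸ p.1.2
    exact Subtype.ext (Subtype.ext (Prod.ext (hpair.eq_zero_of_apply_eq_zero hV ht₀ (hjet p).1) hΓ))
  simpa using LinearMap.rank_le_of_injective _ hinj

end symmetryPairs

theorem symmetry_pairs_dimension_bound_general (hV : ∀ i j, Differentiable ℝ fun t ↦ V t i j)
    (ht₀ : ∀ c : ℝ, V t₀ ≠ c • 1) :
    Module.rank ℝ (symmetryPairs V) ≤ (n ^ 2 - 2 * n + 4 : ℕ) := by
  have hcentralizer := finrank_matrix_centralizer_add_two_mul_le ht₀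
  rw [Fintype.card_fin] at hcentralizer
  calc
    Module.rank ℝ (symmetryPairs V)
    _ = Module.rank ℝ (symmetryPairs.oneJet V t₀).range +
        Module.rank ℝ (symmetryPairs.oneJet V t₀).ker :=
      (LinearMap.rank_range_add_rank_ker _).symm
    _ ≤ (2 : ℕ) + Module.finrank ℝ (Subalgebra.centralizer ℝ {V t₀}) := by
      gcongr
      · simpa [one_add_one_eq_two] using Submodule.rank_le (symmetryPairs.oneJet V t₀).range
      · exact symmetryPairs.rank_ker_oneJet_le hV ht₀
    _ ≤ (n ^ 2 - 2 * n + 4 : ℕ) := by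
      norm_cast
      lia

end SymmetryPairs

/-- The space of symmetry pairs of a system `x_tt = V(t)x` with `V(t₀)` not a multiple of
the identity has dimension at most `n² − 2n + 4`: any `n² − 2n + 5` symmetry pairs are
linearly dependent over `ℝ`. -/
theorem symmetry_pairs_dimension_bound (n : ℕ) (hn : 2 ≤ n)
    (V : ℝ → Matrix (Fin n) (Fin n) ℝ)
    (hV : ∀ i j : Fin n, ContDiff ℝ (⊤ : ℕ∞) fun t => V t i j)
    (t₀ : ℝ) (ht₀ : ∀ c : ℝ, V t₀ ≠ c • (1 : Matrix (Fin n) (Fin n) ℝ))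
    (p : Fin (n ^ 2 - 2 * n + 5) → (ℝ → ℝ) × Matrix (Fin n) (Fin n) ℝ)
    (hp : ∀ i, IsSymmetryPair n V (p i).1 (p i).2) :
    ¬ LinearIndependent ℝ p := by
  intro hli
  simpa using card_le_of_linearIndependent_of_mem (symmetry_pairs_dimension_bound_general
    (fun i j ↦ (hV i j).differentiable (by simp)) ht₀) hp hli
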